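/- Let X and Y be independent nonnegative random variables on a probability space such that X + Y > 0 almost surely and X is integrable. Then E[ X / (X + Y) ] = ∫₀^∞ E[X·e^{-t·X}] · E[e^{-t·Y}] dt. -/

import Mathlib

open MeasureTheory Real Set

/-!
For `z > 0` one has `1 / z = ∫₀^∞ exp (-t z) dt`. Applied pointwise to the denominator, this
turns `E[X / (X + Y)]` into an iterated integral of `X exp (-t (X + Y))`. Integrating the norm in
`t` first gives `|X| / (X + Y)`, so integrability of the ratio is exactly what Fubini's theorem
needs. After the exchange, the exponential splits as `exp (-t X) exp (-t Y)` and independence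
factors the inner expectation for each `t`.
-/

lemma integrableOn_exp_neg_mul_Ioi {z : ℝ} (hz : 0 < z) (a : ℝ) :
    IntegrableOn (fun t ↦ exp (-(t * z))) (Ioi a) := by
  simpa only [neg_mul, mul_comm z] using exp_neg_integrableOn_Ioi a hz

lemma integral_exp_neg_mul_Ioi_zero {z : ℝ} (hz : 0 < z) :
    ∫ t in Ioi (0 : ℝ), exp (-(t * z)) = z⁻¹ := by
  simpa [mul_comm z] using integral_exp_mul_Ioi (neg_lt_zero.mpr hz) 0

section LaplaceRepresentation

variable {Ω E : Type*} [MeasurableSpace Ω] {μ : Measure Ω}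
  [NormedAddCommGroup E] [NormedSpace ℝ E] {f : Ω → E} {g : Ω → ℝ}

lemma integrable_prod_exp_neg_mul_smul (hg : AEMeasurable g μ) (hg_pos : ∀ᵐ ω ∂μ, 0 < g ω)
    (hfg : Integrable (fun ω ↦ (g ω)⁻¹ • f ω) μ) :
    Integrable (fun p : Ω × ℝ ↦ exp (-(p.2 * g p.1)) • f p.1)
      (μ.prod (volume.restrict (Ioi 0))) := by
  have hf : AEStronglyMeasurable f μ := by
    refine (hg.aestronglyMeasurable.smul hfg.aestronglyMeasurable).congr ?_
    filter_upwards [hg_pos] with ω hω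
    exact smul_inv_smul₀ hω.ne' (f ω)
  have h_exp : AEMeasurable (fun p : Ω × ℝ ↦ exp (-(p.2 * g p.1)))
      (μ.prod (volume.restrict (Ioi 0))) :=
    (measurable_snd.aemeasurable.mul hg.comp_fst).neg.exp
  refine (integrable_prod_iff (h_exp.aestronglyMeasurable.smul hf.comp_fst)).mpr ⟨?_, ?_⟩
  · filter_upwards [hg_pos] with ω hω
    exact (integrableOn_exp_neg_mul_Ioi hω 0).smul_const (f ω)
  · refine hfg.norm.congr ?_
    filter_upwards [hg_pos] with ω hω
    simp only [Pi.smul_apply', norm_smul, norm_of_nonneg (exp_pos _).le,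
      norm_of_nonneg (inv_pos.mpr hω).le, integral_mul_const, integral_exp_neg_mul_Ioi_zero hω]

theorem integral_inv_smul_eq_integral_integral_exp_neg_mul_smul [SFinite μ] [CompleteSpace E]
    (hg : AEMeasurable g μ) (hg_pos : ∀ᵐ ω ∂μ, 0 < g ω)
    (hfg : Integrable (fun ω ↦ (g ω)⁻¹ • f ω) μ) :
    ∫ ω, (g ω)⁻¹ • f ω ∂μ = ∫ t in Ioi (0 : ℝ), ∫ ω, exp (-(t * g ω)) • f ω ∂μ := by
  calc ∫ ω, (g ω)⁻¹ • f ω ∂μ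
      = ∫ ω, (∫ t in Ioi (0 : ℝ), exp (-(t * g ω)) • f ω) ∂μ := by
        refine integral_congr_ae ?_
        filter_upwards [hg_pos] with ω hω
        rw [integral_smul_const, integral_exp_neg_mul_Ioi_zero hω]
    _ = ∫ t in Ioi (0 : ℝ), ∫ ω, exp (-(t * g ω)) • f ω ∂μ :=
        integral_integral_swap (integrable_prod_exp_neg_mul_smul hg hg_pos hfg)

end LaplaceRepresentation

section Ratio

variable {Ω : Type*} [MeasurableSpace Ω] {μ : Measure Ω} {X Y : Ω → ℝ}

lemma integrable_div_add_of_nonneg [IsFiniteMeasure μ] (hX : AEMeasurable X μ)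
    (hY : AEMeasurable Y μ) (hX_nonneg : 0 ≤ᵐ[μ] X) (hY_nonneg : 0 ≤ᵐ[μ] Y) :
    Integrable (fun ω ↦ X ω / (X ω + Y ω)) μ := by
  refine .of_bound (C := 1) (hX.div (hX.add hY)).aestronglyMeasurable ?_
  filter_upwards [hX_nonneg, hY_nonneg] with ω hXω hYω
  have h_sum : 0 ≤ X ω + Y ω := add_nonneg hXω hYω
  rw [norm_of_nonneg (div_nonneg hXω h_sum)]
  exact div_le_one_of_le₀ (le_add_of_nonneg_right hYω) h_sum

lemma integral_exp_neg_mul_add_mul_of_indepFun (hX : AEMeasurable X μ) (hY : AEMeasurable Y μ)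
    (hXY : ProbabilityTheory.IndepFun X Y μ) (t : ℝ) :
    ∫ ω, exp (-(t * (X ω + Y ω))) * X ω ∂μ
      = (∫ ω, X ω * exp (-(t * X ω)) ∂μ) * ∫ ω, exp (-(t * Y ω)) ∂μ := by
  have h_split (x y : ℝ) :
      exp (-(t * (x + y))) * x = x * exp (-(t * x)) * exp (-(t * y)) := by
    rw [mul_add, neg_add, exp_add]
    ring
  simp only [h_split]
  exact hXY.integral_fun_comp_mul_comp (f := fun x ↦ x * exp (-(t * x)))
    (g := fun y ↦ exp (-(t * y))) hX hY (by fun_prop) (by fun_prop)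

theorem ratio_expectation_laplace_general [SFinite μ] (hX : AEMeasurable X μ)
    (hY : AEMeasurable Y μ) (h_pos : ∀ᵐ ω ∂μ, 0 < X ω + Y ω)
    (h_ratio : Integrable (fun ω ↦ X ω / (X ω + Y ω)) μ)
    (hXY : ProbabilityTheory.IndepFun X Y μ) :
    ∫ ω, X ω / (X ω + Y ω) ∂μ
      = ∫ t in Ioi (0 : ℝ),
          (∫ ω, X ω * exp (-(t * X ω)) ∂μ) * (∫ ω, exp (-(t * Y ω)) ∂μ) := by
  simp only [div_eq_inv_mul] at h_ratio ⊢
  calc ∫ ω, (X ω + Y ω)⁻¹ * X ω ∂μ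
      = ∫ t in Ioi (0 : ℝ), ∫ ω, exp (-(t * (X ω + Y ω))) * X ω ∂μ :=
        integral_inv_smul_eq_integral_integral_exp_neg_mul_smul (hX.add hY) h_pos h_ratio
    _ = ∫ t in Ioi (0 : ℝ),
          (∫ ω, X ω * exp (-(t * X ω)) ∂μ) * (∫ ω, exp (-(t * Y ω)) ∂μ) := by
        simp only [integral_exp_neg_mul_add_mul_of_indepFun hX hY hXY]

end Ratio

/-- **Key step in the proof of Lemma 1.**
For independent nonnegative random variables `X`, `Y` with `X + Y > 0` a.s.
and `X` integrable, the expectation of the ratio `X/(X+Y)` is given by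
`E[X/(X+Y)] = ∫₀^∞ E[X·e^{-tX}] · E[e^{-tY}] dt`. -/
theorem ratio_expectation_laplace
    {Ω : Type*} [MeasurableSpace Ω] (μ : Measure Ω) [IsProbabilityMeasure μ]
    (X Y : Ω → ℝ) (hXm : Measurable X) (hYm : Measurable Y)
    (hXnn : ∀ ω, 0 ≤ X ω) (hYnn : ∀ ω, 0 ≤ Y ω)
    (hpos : ∀ᵐ ω ∂μ, 0 < X ω + Y ω)
    (hXint : Integrable X μ)
    (hindep : ProbabilityTheory.IndepFun X Y μ) :
    ∫ ω, X ω / (X ω + Y ω) ∂μ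
      = ∫ t in Ioi (0 : ℝ),
          (∫ ω, X ω * Real.exp (-(t * X ω)) ∂μ) * (∫ ω, Real.exp (-(t * Y ω)) ∂μ) := by
  have h_ratio := integrable_div_add_of_nonneg (μ := μ) hXm.aemeasurable hYm.aemeasurable
    (.of_forall hXnn) (.of_forall hYnn)
  exact ratio_expectation_laplace_general hXm.aemeasurable hYm.aemeasurable hpos h_ratio hindep
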